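/- Fix A > 0 and a family of constants (C_j). There are constants C′ > 0 and 0 < c₁ < c₂ with the following property. Let Y ≥ 1 and let w : ℝ → ℂ be smooth, supported in [Y/2, 3Y], with |w^{(j)}(y)| ≤ C_j Y^{−j} for all j ≥ 0. Define f(t) = (1/2π) ∫_0^∞ w(y) e(y) y^{−it} dy/y for real t. Then: (i) |f(t)| ≤ C′ (|t| + Y)^{−A} for every real t with t ∉ [c₁ Y, c₂ Y]; and (ii) |f(t)| ≤ C′ Y^{−1/2} for every real t. -/

import Mathlib

open MeasureTheory

/-- `e(x) = e^{2πix}`. -/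
noncomputable def eexp (x : ℝ) : ℂ := Complex.exp (2 * Real.pi * Complex.I * x)

/-- The Mellin transform `f(t) = (1/2π) ∫₀^∞ w(y) e(y) y^{-it} dy/y` of a smoothly
truncated exponential. -/
noncomputable def mellinTruncExp (w : ℝ → ℂ) (t : ℝ) : ℂ :=
  (1 / (2 * Real.pi) : ℝ) *
    ∫ y in Set.Ioi (0 : ℝ), w y * eexp y * ((y : ℝ) : ℂ) ^ (-(Complex.I * t)) / y

/-- The oscillating factor. -/
noncomputable def oscE (t y : ℝ) : ℂ := eexp y * ((y : ℝ) : ℂ) ^ (-(Complex.I * t))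

lemma norm_oscE (t y : ℝ) (hy : 0 < y) : ‖oscE t y‖ = 1 := by
  unfold oscE eexp
  rw [norm_mul, Complex.norm_cpow_eq_rpow_re_of_pos hy, Complex.norm_exp]
  simp

lemma hasDerivAt_oscE (t y : ℝ) (hy : 0 < y) :
    HasDerivAt (oscE t)
      (Complex.I * (((2 * Real.pi * y - t : ℝ) : ℂ) / (y : ℂ)) * oscE t y) y := by
  have hyc : (y : ℂ) ≠ 0 := by exact_mod_cast hy.ne'
  have h1 : HasDerivAt eexp (eexp y * (2 * Real.pi * Complex.I)) y := by
    have h0 : HasDerivAt (fun x : ℝ => (2 * Real.pi * Complex.I * (x : ℂ)))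
        (2 * Real.pi * Complex.I) y := by
      have d0 : HasDerivAt (fun y : ℝ => (y : ℂ)) 1 y := (hasDerivAt_id y).ofReal_comp
      simpa using d0.const_mul (2 * Real.pi * Complex.I)
    exact h0.cexp
  have h2 : HasDerivAt (fun x : ℝ => (x : ℂ) ^ (-(Complex.I * t)))
      (-(Complex.I * t) * (y : ℂ) ^ (-(Complex.I * t) - 1)) y := by
    have h0 : HasDerivAt (fun z : ℂ => z ^ (-(Complex.I * t)))
        (-(Complex.I * t) * (y : ℂ) ^ (-(Complex.I * t) - 1) * 1) (y : ℂ) :=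
      (hasDerivAt_id (y : ℂ)).cpow_const (Or.inl (by simpa using hy))
    simpa using h0.comp_ofReal
  have h3 := h1.mul h2
  refine h3.congr_deriv ?_
  unfold oscE
  rw [Complex.cpow_sub _ _ hyc, Complex.cpow_one]
  push_cast
  field_simp
  ring

/-- Integration by parts. -/
lemma ibp_osc (t a b : ℝ) (ha : 0 < a) (hab : a ≤ b) (g g' : ℝ → ℂ)
    (hg : ∀ y ∈ Set.Icc a b, HasDerivAt g (g' y) y) (hg' : ContinuousOn g' (Set.Icc a b))
    (hga : g a = 0) (hgb : g b = 0) :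
    ‖∫ y in a..b, g y * (((2 * Real.pi * y - t : ℝ) : ℂ) / (y : ℂ)) * oscE t y‖
      = ‖∫ y in a..b, g' y * oscE t y‖ := by
  have hpos : ∀ y ∈ Set.Icc a b, 0 < y := fun y hy => lt_of_lt_of_le ha hy.1
  have hE : ContinuousOn (oscE t) (Set.Icc a b) := fun y hy =>
    (hasDerivAt_oscE t y (hpos y hy)).continuousAt.continuousWithinAt
  have hgc : ContinuousOn g (Set.Icc a b) := fun y hy =>
    (hg y hy).continuousAt.continuousWithinAt
  have hD : ContinuousOn (fun y : ℝ => (((2 * Real.pi * y - t : ℝ) : ℂ) / (y : ℂ)))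
      (Set.Icc a b) := by
    apply ContinuousOn.div
    · fun_prop
    · fun_prop
    · intro y hy
      exact_mod_cast (hpos y hy).ne'
  have hI1 : IntervalIntegrable (fun y => g' y * oscE t y) volume a b := by
    apply ContinuousOn.intervalIntegrable
    rw [Set.uIcc_of_le hab]
    exact hg'.mul hE
  have hI2 : IntervalIntegrable
      (fun y => g y * (((2 * Real.pi * y - t : ℝ) : ℂ) / (y : ℂ)) * oscE t y) volume a b := by
    apply ContinuousOn.intervalIntegrable
    rw [Set.uIcc_of_le hab]
    exact (hgc.mul hD).mul hE
  have key : ∫ y in a..b, (g' y * oscE t y + Complex.I *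
      (g y * (((2 * Real.pi * y - t : ℝ) : ℂ) / (y : ℂ)) * oscE t y)) = 0 := by
    rw [intervalIntegral.integral_eq_sub_of_hasDerivAt (f := fun y => g y * oscE t y)]
    · simp [hga, hgb]
    · intro y hy
      rw [Set.uIcc_of_le hab] at hy
      refine ((hg y hy).mul (hasDerivAt_oscE t y (hpos y hy))).congr_deriv ?_
      ring
    · exact hI1.add (hI2.const_mul _)
  rw [intervalIntegral.integral_add hI1 (hI2.const_mul _),
    intervalIntegral.integral_const_mul] at key
  rw [eq_neg_of_add_eq_zero_left key]
  simp

/-- Admissibility of the weight. -/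
def AdmW (Cj : ℕ → ℝ) (Y : ℝ) (w : ℝ → ℂ) : Prop :=
  1 ≤ Y ∧ ContDiff ℝ (⊤ : ℕ∞) w ∧ Function.support w ⊆ Set.Icc (Y / 2) (3 * Y) ∧
    (∀ (j : ℕ) (y : ℝ), ‖iteratedDeriv j w y‖ ≤ Cj j * Y ^ (-(j : ℝ)))

lemma AdmW.hasDerivAt {Cj : ℕ → ℝ} {Y : ℝ} {w : ℝ → ℂ} (h : AdmW Cj Y w) (j : ℕ) (y : ℝ) :
    HasDerivAt (iteratedDeriv j w) (iteratedDeriv (j + 1) w y) y := by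
  have h1 : Differentiable ℝ (iteratedDeriv j w) :=
    h.2.1.differentiable_iteratedDeriv j (by exact_mod_cast WithTop.coe_lt_top j)
  rw [iteratedDeriv_succ]
  exact (h1 y).hasDerivAt

lemma AdmW.continuous {Cj : ℕ → ℝ} {Y : ℝ} {w : ℝ → ℂ} (h : AdmW Cj Y w) (j : ℕ) :
    Continuous (iteratedDeriv j w) :=
  continuous_iff_continuousAt.2 fun y => (h.hasDerivAt j y).continuousAt

lemma AdmW.zero {Cj : ℕ → ℝ} {Y : ℝ} {w : ℝ → ℂ} (h : AdmW Cj Y w) (j : ℕ) (y : ℝ)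
    (hy : y ∉ Set.Ioo (Y / 2) (3 * Y)) : iteratedDeriv j w y = 0 := by
  have h1 : ∀ j, Function.support (iteratedDeriv j w) ⊆ Set.Icc (Y / 2) (3 * Y) := by
    intro j
    induction j with
    | zero => simpa using h.2.2.1
    | succ j ih =>
      rw [iteratedDeriv_succ]
      exact support_deriv_subset.trans (closure_minimal ih isClosed_Icc)
  have h2 := interior_maximal (h1 j) (h.continuous j).isOpen_support
  rw [interior_Icc] at h2
  by_contra h3
  exact hy (h2 h3)

lemma AdmW.bound {Cj : ℕ → ℝ} {Y : ℝ} {w : ℝ → ℂ} (h : AdmW Cj Y w) (j : ℕ) (y : ℝ) :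
    ‖iteratedDeriv j w y‖ ≤ |Cj j| / Y ^ j := by
  have hY : 0 < Y := lt_of_lt_of_le one_pos h.1
  refine (h.2.2.2 j y).trans ?_
  rw [Real.rpow_neg hY.le, Real.rpow_natCast, div_eq_mul_inv]
  gcongr
  exact le_abs_self _

/-- The integral family. -/
noncomputable def Jint (w : ℝ → ℂ) (Y t : ℝ) (j k m : ℕ) : ℂ :=
  ∫ y in (Y / 2)..(3 * Y),
    iteratedDeriv j w y * ((y : ℂ) ^ k / ((y : ℂ) * ((2 * Real.pi * y - t : ℝ) : ℂ) ^ m)) *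
      oscE t y

lemma mellin_eq {Cj : ℕ → ℝ} {Y : ℝ} {w : ℝ → ℂ} (h : AdmW Cj Y w) (t : ℝ) :
    mellinTruncExp w t = (1 / (2 * Real.pi) : ℝ) * Jint w Y t 0 0 0 := by
  have hY : 0 < Y := lt_of_lt_of_le one_pos h.1
  unfold mellinTruncExp Jint
  congr 1
  rw [intervalIntegral.integral_of_le (by linarith)]
  refine Eq.trans ((setIntegral_eq_of_subset_of_forall_sdiff_eq_zero
    (f := fun y : ℝ => w y * eexp y * ((y : ℝ) : ℂ) ^ (-(Complex.I * t)) / y)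
    (s := Set.Ioc (Y / 2) (3 * Y)) (t := Set.Ioi 0) measurableSet_Ioi ?_ ?_)) ?_
  rotate_left 2
  · refine setIntegral_congr_fun measurableSet_Ioc ?_
    intro y hy
    simp only [iteratedDeriv_zero, oscE, pow_zero, mul_one]
    ring
  · intro y hy
    exact lt_trans (by positivity) hy.1
  · intro y hy
    have := h.zero 0 y (fun hh => hy.2 ⟨hh.1, hh.2.le⟩)
    rw [iteratedDeriv_zero] at this
    simp [this]

lemma norm_mellin_le {Cj : ℕ → ℝ} {Y : ℝ} {w : ℝ → ℂ} (h : AdmW Cj Y w) (t : ℝ) :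
    ‖mellinTruncExp w t‖ ≤ ‖Jint w Y t 0 0 0‖ := by
  rw [mellin_eq h, norm_mul, Complex.norm_real]
  have : ‖(1 / (2 * Real.pi) : ℝ)‖ ≤ 1 := by
    rw [Real.norm_of_nonneg (by positivity)]
    rw [div_le_one (by positivity)]
    linarith [Real.pi_gt_three]
  exact mul_le_of_le_one_left (norm_nonneg _) this

lemma phase_lower {Y t y : ℝ} (hY : 1 ≤ Y) (ht : t ∉ Set.Icc (1 * Y) (40 * Y))
    (hy : y ∈ Set.Icc (Y / 2) (3 * Y)) : (|t| + Y) / 4 ≤ |2 * Real.pi * y - t| := by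
  have h3 := Real.pi_gt_three
  have h4 := Real.pi_lt_d2
  obtain ⟨hy1, hy2⟩ := hy
  have e1 : 3 * Y ≤ 2 * Real.pi * y := by nlinarith
  have e2 : 2 * Real.pi * y ≤ 19 * Y := by nlinarith
  rcases lt_or_ge t (1 * Y) with h | h
  · refine le_trans ?_ (le_abs_self _)
    rcases abs_cases t with ⟨h5, h6⟩ | ⟨h5, h6⟩ <;> rw [h5] <;> linarith
  · have h' : 40 * Y < t := by
      by_contra hc
      exact ht ⟨h, not_lt.1 hc⟩
    refine le_trans ?_ (neg_le_abs _)
    rw [abs_of_pos (by linarith)]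
    linarith

lemma Jint_rec {Cj : ℕ → ℝ} {Y : ℝ} {w : ℝ → ℂ} (h : AdmW Cj Y w) (t : ℝ)
    (hD : ∀ y ∈ Set.Icc (Y / 2) (3 * Y), 2 * Real.pi * y - t ≠ 0) (j k m : ℕ) :
    ‖Jint w Y t j k m‖ ≤ ‖Jint w Y t (j + 1) (k + 1) (m + 1)‖ + k * ‖Jint w Y t j k (m + 1)‖
      + 2 * Real.pi * (m + 1) * ‖Jint w Y t j (k + 1) (m + 2)‖ := by
  have hY : 0 < Y := lt_of_lt_of_le one_pos h.1
  have hab : Y / 2 ≤ 3 * Y := by linarith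
  have ha : 0 < Y / 2 := by positivity
  have hpos : ∀ y ∈ Set.Icc (Y / 2) (3 * Y), 0 < y := fun y hy => lt_of_lt_of_le ha hy.1
  have hI : ∀ j k m : ℕ, IntervalIntegrable (fun y : ℝ => iteratedDeriv j w y *
      ((y : ℂ) ^ k / ((y : ℂ) * ((2 * Real.pi * y - t : ℝ) : ℂ) ^ m)) * oscE t y) volume
      (Y / 2) (3 * Y) := by
    intro j k m
    apply ContinuousOn.intervalIntegrable
    rw [Set.uIcc_of_le hab]
    refine ContinuousOn.mul (ContinuousOn.mul (h.continuous j).continuousOn ?_) ?_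
    · apply ContinuousOn.div
      · fun_prop
      · fun_prop
      · intro y hy
        have h1 := hD y hy
        have h2 := (hpos y hy).ne'
        refine mul_ne_zero (by exact_mod_cast h2) (pow_ne_zero _ (by exact_mod_cast h1))
    · exact fun y hy => (hasDerivAt_oscE t y (hpos y hy)).continuousAt.continuousWithinAt
  set g : ℝ → ℂ := fun y => iteratedDeriv j w y *
    ((y : ℂ) ^ k / ((2 * Real.pi * y - t : ℝ) : ℂ) ^ (m + 1)) with hgdef
  set g' : ℝ → ℂ := fun y =>
    iteratedDeriv (j + 1) w y * ((y : ℂ) ^ (k + 1) /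
      ((y : ℂ) * ((2 * Real.pi * y - t : ℝ) : ℂ) ^ (m + 1))) +
    k * (iteratedDeriv j w y * ((y : ℂ) ^ k /
      ((y : ℂ) * ((2 * Real.pi * y - t : ℝ) : ℂ) ^ (m + 1)))) -
    (2 * Real.pi * (m + 1) : ℝ) * (iteratedDeriv j w y * ((y : ℂ) ^ (k + 1) /
      ((y : ℂ) * ((2 * Real.pi * y - t : ℝ) : ℂ) ^ (m + 2)))) with hg'def
  have hgd : ∀ y ∈ Set.Icc (Y / 2) (3 * Y), HasDerivAt g (g' y) y := by
    intro y hy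
    have hDy : ((2 * Real.pi * y - t : ℝ) : ℂ) ≠ 0 := by exact_mod_cast hD y hy
    have hyc : (y : ℂ) ≠ 0 := by exact_mod_cast (hpos y hy).ne'
    have d0 : HasDerivAt (fun y : ℝ => (y : ℂ)) 1 y := by
      exact (hasDerivAt_id y).ofReal_comp
    have d1 : HasDerivAt (fun y : ℝ => ((2 * Real.pi * y - t : ℝ) : ℂ)) (2 * Real.pi) y := by
      have := (d0.const_mul (2 * Real.pi : ℂ)).sub_const (t : ℂ)
      simpa using this
    refine ((h.hasDerivAt j y).mul ((d0.pow k).div (d1.pow (m + 1))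
      (pow_ne_zero _ hDy))).congr_deriv ?_
    simp only [hg'def, Pi.pow_apply, Pi.div_apply]
    generalize ((2 * Real.pi * y - t : ℝ) : ℂ) = D at *
    push_cast
    rcases k with _ | k
    · simp
      field_simp
      ring
    · simp
      field_simp
      ring
  have hg'c : ContinuousOn g' (Set.Icc (Y / 2) (3 * Y)) := by
    have hc : ∀ j k m : ℕ, ContinuousOn (fun y : ℝ => iteratedDeriv j w y *
      ((y : ℂ) ^ k / ((y : ℂ) * ((2 * Real.pi * y - t : ℝ) : ℂ) ^ m)))
      (Set.Icc (Y / 2) (3 * Y)) := by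
      intro j k m
      refine ContinuousOn.mul (h.continuous j).continuousOn ?_
      apply ContinuousOn.div
      · fun_prop
      · fun_prop
      · intro y hy
        have h1 := hD y hy
        have h2 := (hpos y hy).ne'
        refine mul_ne_zero (by exact_mod_cast h2) (pow_ne_zero _ (by exact_mod_cast h1))
    exact ((hc _ _ _).add (continuousOn_const.mul (hc _ _ _))).sub
      (continuousOn_const.mul (hc _ _ _))
  have key := ibp_osc t (Y / 2) (3 * Y) ha hab g g' hgd hg'c
    (by simp [hgdef, h.zero j (Y / 2) (by simp)]) (by simp [hgdef, h.zero j (3 * Y) (by simp)])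
  have e1 : Jint w Y t j k m = ∫ y in (Y / 2)..(3 * Y),
      g y * (((2 * Real.pi * y - t : ℝ) : ℂ) / (y : ℂ)) * oscE t y := by
    unfold Jint
    apply intervalIntegral.integral_congr
    intro y hy
    rw [Set.uIcc_of_le hab] at hy
    have hDy : ((2 * Real.pi * y - t : ℝ) : ℂ) ≠ 0 := by exact_mod_cast hD y hy
    have hyc : (y : ℂ) ≠ 0 := by exact_mod_cast (hpos y hy).ne'
    simp only [hgdef]
    generalize ((2 * Real.pi * y - t : ℝ) : ℂ) = D at *
    field_simp
    ring
  have e2 : ∫ y in (Y / 2)..(3 * Y), g' y * oscE t y =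
      Jint w Y t (j + 1) (k + 1) (m + 1) + k * Jint w Y t j k (m + 1)
      - (2 * Real.pi * (m + 1) : ℝ) * Jint w Y t j (k + 1) (m + 2) := by
    unfold Jint
    rw [← intervalIntegral.integral_const_mul, ← intervalIntegral.integral_const_mul,
      ← intervalIntegral.integral_add (hI _ _ _) ((hI _ _ _).const_mul _),
      ← intervalIntegral.integral_sub ((hI _ _ _).add ((hI _ _ _).const_mul _))
        ((hI _ _ _).const_mul _)]
    apply intervalIntegral.integral_congr
    intro y hy
    simp only [hg'def]
    ring
  rw [e1, key, e2]
  refine (norm_sub_le _ _).trans ?_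
  refine add_le_add ((norm_add_le _ _).trans (le_of_eq ?_)) (le_of_eq ?_)
  · rw [norm_mul, Complex.norm_natCast]
  · rw [norm_mul, Complex.norm_real, Real.norm_of_nonneg (by positivity)]

lemma Jint_bound (Cj : ℕ → ℝ) (N : ℕ) : ∀ j k m : ℕ, ∃ C : ℝ, 0 ≤ C ∧
    ∀ (Y t : ℝ) (w : ℝ → ℂ), AdmW Cj Y w → t ∉ Set.Icc (1 * Y) (40 * Y) →
      ‖Jint w Y t j k m‖ ≤ C * (Y ^ k / Y ^ j / (|t| + Y) ^ (m + N)) := by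
  induction N with
  | zero =>
    intro j k m
    refine ⟨|Cj j| * 3 ^ k * 2 * 4 ^ m * 3, by positivity, ?_⟩
    intro Y t w h ht
    have hY : 0 < Y := lt_of_lt_of_le one_pos h.1
    have hL : 0 < |t| + Y := by positivity
    have hab : Y / 2 ≤ 3 * Y := by linarith
    have hb : ∀ y ∈ Set.uIoc (Y / 2) (3 * Y), ‖iteratedDeriv j w y *
        ((y : ℂ) ^ k / ((y : ℂ) * ((2 * Real.pi * y - t : ℝ) : ℂ) ^ m)) * oscE t y‖ ≤
        (|Cj j| / Y ^ j) * ((3 * Y) ^ k / ((Y / 2) * ((|t| + Y) / 4) ^ m)) := by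
      intro y hy
      rw [Set.uIoc_of_le hab] at hy
      have hy0 : 0 < y := lt_trans (by positivity) hy.1
      rw [norm_mul, norm_mul, norm_oscE t y hy0, mul_one, norm_div, norm_mul, norm_pow, norm_pow,
        Complex.norm_real, Complex.norm_real, Real.norm_of_nonneg hy0.le, Real.norm_eq_abs]
      have h1 := phase_lower h.1 ht ⟨hy.1.le, hy.2⟩
      have h2 := h.bound j y
      have h3 := hy.1.le
      have h4 := hy.2
      gcongr
    refine (intervalIntegral.norm_integral_le_of_norm_le_const hb).trans ?_
    rw [abs_of_nonneg (show 0 ≤ 3 * Y - Y / 2 by linarith)]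
    have : 3 * Y - Y / 2 ≤ 3 * Y := by linarith
    calc _ ≤ (|Cj j| / Y ^ j) * ((3 * Y) ^ k / ((Y / 2) * ((|t| + Y) / 4) ^ m)) * (3 * Y) := by
            gcongr
      _ = _ := by
        rw [mul_pow, div_pow]
        field_simp
        ring
  | succ N ih =>
    intro j k m
    obtain ⟨C1, h1, H1⟩ := ih (j + 1) (k + 1) (m + 1)
    obtain ⟨C2, h2, H2⟩ := ih j k (m + 1)
    obtain ⟨C3, h3, H3⟩ := ih j (k + 1) (m + 2)
    refine ⟨C1 + k * C2 + 2 * Real.pi * (m + 1) * C3, by positivity, ?_⟩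
    intro Y t w h ht
    have hY : 0 < Y := lt_of_lt_of_le one_pos h.1
    have hL : 0 < |t| + Y := by positivity
    have hD : ∀ y ∈ Set.Icc (Y / 2) (3 * Y), 2 * Real.pi * y - t ≠ 0 := by
      intro y hy h0
      have := phase_lower h.1 ht hy
      rw [h0, abs_zero] at this
      linarith
    set X : ℝ := Y ^ k / Y ^ j / (|t| + Y) ^ (m + (N + 1)) with hX
    have b1 : ‖Jint w Y t (j + 1) (k + 1) (m + 1)‖ ≤ C1 * X := by
      refine (H1 Y t w h ht).trans (le_of_eq ?_)
      rw [hX, show m + 1 + N = m + (N + 1) by ring, pow_succ, pow_succ]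
      field_simp
    have b2 : ‖Jint w Y t j k (m + 1)‖ ≤ C2 * X := by
      refine (H2 Y t w h ht).trans (le_of_eq ?_)
      rw [hX, show m + 1 + N = m + (N + 1) by ring]
    have b3 : ‖Jint w Y t j (k + 1) (m + 2)‖ ≤ C3 * X := by
      refine (H3 Y t w h ht).trans ?_
      refine mul_le_mul_of_nonneg_left ?_ h3
      have e : Y ^ (k + 1) / Y ^ j / (|t| + Y) ^ (m + 2 + N) = X * (Y / (|t| + Y)) := by
        rw [hX, show m + 2 + N = m + (N + 1) + 1 by ring, pow_succ, pow_succ (|t| + Y)]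
        field_simp
      rw [e]
      refine mul_le_of_le_one_right (by positivity) ?_
      rw [div_le_one hL]
      linarith [abs_nonneg t]
    refine (Jint_rec h t hD j k m).trans ?_
    calc _ ≤ C1 * X + k * (C2 * X) + 2 * Real.pi * (m + 1) * (C3 * X) := by gcongr
      _ = _ := by ring

lemma arctan_int (t s a b : ℝ) (hs : 0 < s) :
    IntervalIntegrable (fun y : ℝ => 1 / ((2 * Real.pi * y - t) ^ 2 + s ^ 2)) volume a b ∧
    ∫ y in a..b, 1 / ((2 * Real.pi * y - t) ^ 2 + s ^ 2) ≤ 1 / s := by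
  have hp := Real.pi_pos
  have hI : IntervalIntegrable (fun y : ℝ => 1 / ((2 * Real.pi * y - t) ^ 2 + s ^ 2))
      volume a b := by
    apply Continuous.intervalIntegrable
    refine Continuous.div (by fun_prop) (by fun_prop) ?_
    intro y
    positivity
  refine ⟨hI, ?_⟩
  rw [intervalIntegral.integral_eq_sub_of_hasDerivAt
    (f := fun y => Real.arctan ((2 * Real.pi * y - t) / s) / (2 * Real.pi * s)) _ hI]
  · rw [← sub_div, div_le_div_iff₀ (by positivity) hs]
    have h1 := Real.arctan_lt_pi_div_two ((2 * Real.pi * b - t) / s)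
    have h2 := Real.neg_pi_div_two_lt_arctan ((2 * Real.pi * a - t) / s)
    nlinarith
  · intro y _
    have d1 : HasDerivAt (fun y : ℝ => (2 * Real.pi * y - t) / s) (2 * Real.pi / s) y := by
      simpa using (((hasDerivAt_id y).const_mul (2 * Real.pi)).sub_const t).div_const s
    refine (d1.arctan.div_const (2 * Real.pi * s)).congr_deriv ?_
    have : (2 * Real.pi * y - t) ^ 2 + s ^ 2 ≠ 0 := by positivity
    have h3 : s ^ 2 + (2 * Real.pi * y - t) ^ 2 ≠ 0 := by positivity
    field_simp
    ring

lemma Jint_half {Cj : ℕ → ℝ} {Y : ℝ} {w : ℝ → ℂ} (h : AdmW Cj Y w) (t : ℝ) :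
    ‖Jint w Y t 0 0 0‖ ≤ (9 * |Cj 0| + 3 * |Cj 1|) / Real.sqrt Y := by
  have hY : 0 < Y := lt_of_lt_of_le one_pos h.1
  have hp := Real.pi_pos
  have hab : Y / 2 ≤ 3 * Y := by linarith
  have ha : 0 < Y / 2 := by positivity
  have hpos : ∀ y ∈ Set.Icc (Y / 2) (3 * Y), 0 < y := fun y hy => lt_of_lt_of_le ha hy.1
  set s := Real.sqrt Y with hsdef
  have hs : 0 < s := Real.sqrt_pos.2 hY
  have hsY : s ^ 2 = Y := Real.sq_sqrt hY.le
  obtain ⟨hKI, hK⟩ := arctan_int t s (Y / 2) (3 * Y) hs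
  set q : ℝ → ℝ := fun y => (2 * Real.pi * y - t) ^ 2 + s ^ 2 with hq
  have hq0 : ∀ y, 0 < q y := fun y => by simp only [hq]; positivity
  have hqc : Continuous q := by simp only [hq]; fun_prop
  set r : ℝ → ℝ := fun y => (2 * Real.pi * y - t) / q y with hr
  set r' : ℝ → ℝ := fun y => 2 * Real.pi * (s ^ 2 - (2 * Real.pi * y - t) ^ 2) / (q y) ^ 2 with hr'
  have hrd : ∀ y, HasDerivAt r (r' y) y := by
    intro y
    have d1 : HasDerivAt (fun y : ℝ => 2 * Real.pi * y - t) (2 * Real.pi) y := by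
      simpa using ((hasDerivAt_id y).const_mul (2 * Real.pi)).sub_const t
    refine (d1.div ((d1.pow 2).add_const (s ^ 2)) (hq0 y).ne').congr_deriv ?_
    simp only [hr', hq, Pi.pow_apply]
    congr 1
    push_cast
    ring
  have hr'c : Continuous r' := by
    simp only [hr']
    refine Continuous.div (by fun_prop) (by fun_prop) ?_
    intro y
    exact (pow_pos (hq0 y) 2).ne'
  have hrb : ∀ y, |r y| ≤ 1 / s := by
    intro y
    simp only [hr]
    rw [abs_div, abs_of_pos (hq0 y), div_le_div_iff₀ (hq0 y) hs]
    simp only [hq]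
    rw [← sq_abs (2 * Real.pi * y - t)]
    nlinarith [sq_nonneg (|2 * Real.pi * y - t| - s), abs_nonneg (2 * Real.pi * y - t)]
  have hr'b : ∀ y, |r' y| ≤ 7 * (1 / q y) := by
    intro y
    simp only [hr']
    rw [abs_div, abs_of_pos (pow_pos (hq0 y) 2), abs_mul, abs_of_pos (by positivity),
      mul_one_div, div_le_div_iff₀ (pow_pos (hq0 y) 2) (hq0 y)]
    have e : |s ^ 2 - (2 * Real.pi * y - t) ^ 2| ≤ q y := by
      simp only [hq]
      rw [abs_le]
      constructor <;> nlinarith [sq_nonneg s, sq_nonneg (2 * Real.pi * y - t)]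
    have e7 : 2 * Real.pi ≤ 7 := by linarith [Real.pi_lt_d2]
    calc _ ≤ 7 * q y * q y := by
            have := (hq0 y).le
            gcongr
      _ = _ := by ring
  set g : ℝ → ℂ := fun y => iteratedDeriv 0 w y * (r y : ℂ) with hg
  set g' : ℝ → ℂ := fun y => iteratedDeriv 1 w y * (r y : ℂ) + iteratedDeriv 0 w y * (r' y : ℂ)
    with hg'
  have hrc : Continuous r := continuous_iff_continuousAt.2 fun y => (hrd y).continuousAt
  have hw0 := h.continuous 0
  have hw1 := h.continuous 1
  have hgc : Continuous g := by simp only [hg]; fun_prop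
  have hg'c : Continuous g' := by simp only [hg']; fun_prop
  have key := ibp_osc t (Y / 2) (3 * Y) ha hab g g'
    (fun y _ => (h.hasDerivAt 0 y).mul (hrd y).ofReal_comp) hg'c.continuousOn
    (by simp only [hg]; rw [h.zero 0 (Y / 2) (by simp), zero_mul])
    (by simp only [hg]; rw [h.zero 0 (3 * Y) (by simp), zero_mul])
  have hE : ContinuousOn (oscE t) (Set.Icc (Y / 2) (3 * Y)) := fun y hy =>
    (hasDerivAt_oscE t y (hpos y hy)).continuousAt.continuousWithinAt
  have hsplit : Jint w Y t 0 0 0 =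
      (∫ y in (Y / 2)..(3 * Y), iteratedDeriv 0 w y * ((s ^ 2 / q y : ℝ) : ℂ) / (y : ℂ) * oscE t y)
      + ∫ y in (Y / 2)..(3 * Y),
        g y * (((2 * Real.pi * y - t : ℝ) : ℂ) / (y : ℂ)) * oscE t y := by
    rw [← intervalIntegral.integral_add]
    · unfold Jint
      apply intervalIntegral.integral_congr
      intro y hy
      rw [Set.uIcc_of_le hab] at hy
      have hyc : (y : ℂ) ≠ 0 := by exact_mod_cast (hpos y hy).ne'
      have e : ((s ^ 2 / q y : ℝ) : ℂ) + (r y : ℂ) * ((2 * Real.pi * y - t : ℝ) : ℂ) = 1 := by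
        rw [← Complex.ofReal_mul, ← Complex.ofReal_add, ← Complex.ofReal_one]
        congr 1
        simp only [hr]
        have := (hq0 y).ne'
        field_simp
        simp only [hq]
        ring
      simp only [hg, pow_zero, mul_one]
      calc _ = iteratedDeriv 0 w y * 1 / (y : ℂ) * oscE t y := by ring
        _ = _ := by rw [← e]; ring
    · apply ContinuousOn.intervalIntegrable
      rw [Set.uIcc_of_le hab]
      refine ContinuousOn.mul (ContinuousOn.div ?_ (by fun_prop) ?_) hE
      · refine (hw0.mul (Complex.continuous_ofReal.comp ?_)).continuousOn
        exact Continuous.div continuous_const hqc (fun y => (hq0 y).ne')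
      · intro y hy
        exact_mod_cast (hpos y hy).ne'
    · apply ContinuousOn.intervalIntegrable
      rw [Set.uIcc_of_le hab]
      refine ContinuousOn.mul (hgc.continuousOn.mul (ContinuousOn.div ?_ (by fun_prop) ?_)) hE
      · fun_prop
      · intro y hy
        exact_mod_cast (hpos y hy).ne'
  have B0 : ∀ y, ‖iteratedDeriv 0 w y‖ ≤ |Cj 0| := fun y => by simpa using h.bound 0 y
  have B1 : ∀ y, ‖iteratedDeriv 1 w y‖ ≤ |Cj 1| / Y := fun y => by simpa using h.bound 1 y
  have P1 : ‖∫ y in (Y / 2)..(3 * Y),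
      iteratedDeriv 0 w y * ((s ^ 2 / q y : ℝ) : ℂ) / (y : ℂ) * oscE t y‖
      ≤ 2 * |Cj 0| / s := by
    refine (intervalIntegral.norm_integral_le_of_norm_le hab
      (g := fun y => 2 * |Cj 0| * (1 / q y)) ?_ (hKI.const_mul _)).trans ?_
    · refine Filter.Eventually.of_forall fun y hy => ?_
      have hy0 : 0 < y := lt_trans ha hy.1
      rw [norm_mul, norm_oscE t y hy0, mul_one, norm_div, norm_mul, Complex.norm_real,
        Complex.norm_real, Real.norm_of_nonneg hy0.le,
        Real.norm_of_nonneg (div_nonneg (sq_nonneg s) (hq0 y).le), hsY]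
      have h1 := hy.1.le
      have h2 := hq0 y
      calc _ ≤ |Cj 0| * (Y / q y) / (Y / 2) := by
              have := B0 y
              gcongr
        _ = _ := by field_simp
    · rw [intervalIntegral.integral_const_mul, ← mul_one_div (2 * |Cj 0|)]
      exact mul_le_mul_of_nonneg_left hK (by positivity)
  have P2 : ‖∫ y in (Y / 2)..(3 * Y), g' y * oscE t y‖ ≤ (7 * |Cj 0| + 3 * |Cj 1|) / s := by
    refine (intervalIntegral.norm_integral_le_of_norm_le hab
      (g := fun y => |Cj 1| / Y * (1 / s) + 7 * |Cj 0| * (1 / q y)) ?_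
      (intervalIntegrable_const.add (hKI.const_mul _))).trans ?_
    · refine Filter.Eventually.of_forall fun y hy => ?_
      have hy0 : 0 < y := lt_trans ha hy.1
      rw [norm_mul, norm_oscE t y hy0, mul_one]
      refine (norm_add_le _ _).trans ?_
      rw [norm_mul, norm_mul, Complex.norm_real, Complex.norm_real, Real.norm_eq_abs,
        Real.norm_eq_abs]
      have b1 := B1 y
      have b0 := B0 y
      have c1 := hrb y
      have c2 := hr'b y
      calc _ ≤ |Cj 1| / Y * (1 / s) + |Cj 0| * (7 * (1 / q y)) := by gcongr
        _ = _ := by ring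
    · rw [intervalIntegral.integral_add intervalIntegrable_const (hKI.const_mul _),
        intervalIntegral.integral_const_mul (7 * |Cj 0|), intervalIntegral.integral_const,
        smul_eq_mul]
      have e1 : (3 * Y - Y / 2) * (|Cj 1| / Y * (1 / s)) ≤ 3 * |Cj 1| * (1 / s) := by
        have : (3 * Y - Y / 2) * (|Cj 1| / Y * (1 / s)) = 5 / 2 * |Cj 1| * (1 / s) := by
          field_simp
          ring
        rw [this]
        gcongr
        norm_num
      have e2 : 7 * |Cj 0| * ∫ y in (Y / 2)..(3 * Y), 1 / q y ≤ 7 * |Cj 0| * (1 / s) := by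
        gcongr
      calc _ ≤ 3 * |Cj 1| * (1 / s) + 7 * |Cj 0| * (1 / s) := add_le_add e1 e2
        _ = _ := by ring
  rw [hsplit]
  refine (norm_add_le _ _).trans ?_
  rw [key]
  calc _ ≤ 2 * |Cj 0| / s + (7 * |Cj 0| + 3 * |Cj 1|) / s := add_le_add P1 P2
    _ = _ := by ring

/-- **Mellin transform of a truncated exponential (inside Lemma 7.4)**: for `w` smooth
supported on `[Y/2, 3Y]` with `|w^{(j)}| ≤ C_j Y^{-j}`, the transform
`f(t) = (1/2π) ∫₀^∞ w(y) e(y) y^{-it} dy/y` satisfies `f(t) ≪ (|t| + Y)^{-A}` unless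
`t ≍ Y`, and `f(t) ≪ Y^{-1/2}` always. -/
theorem mellin_trunc_exp_bounds (A : ℝ) (Cj : ℕ → ℝ) (hA : 0 < A) :
    ∃ C' c₁ c₂ : ℝ, 0 < C' ∧ 0 < c₁ ∧ c₁ < c₂ ∧
      ∀ Y : ℝ, 1 ≤ Y →
        ∀ w : ℝ → ℂ, ContDiff ℝ (⊤ : ℕ∞) w → Function.support w ⊆ Set.Icc (Y / 2) (3 * Y) →
          (∀ (j : ℕ) (y : ℝ), ‖iteratedDeriv j w y‖ ≤ Cj j * Y ^ (-(j : ℝ))) →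
          (∀ t : ℝ, t ∉ Set.Icc (c₁ * Y) (c₂ * Y) →
            ‖mellinTruncExp w t‖ ≤ C' * (|t| + Y) ^ (-A)) ∧
          (∀ t : ℝ, ‖mellinTruncExp w t‖ ≤ C' * Y ^ (-(1 : ℝ) / 2)) := by
  obtain ⟨N, hN⟩ := exists_nat_ge A
  obtain ⟨C, hC, H⟩ := Jint_bound Cj N 0 0 0
  refine ⟨C + (9 * |Cj 0| + 3 * |Cj 1|) + 1, 1, 40, by positivity, by norm_num, by norm_num, ?_⟩
  intro Y hY w hw hsupp hb
  have h : AdmW Cj Y w := ⟨hY, hw, hsupp, hb⟩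
  have hY0 : 0 < Y := lt_of_lt_of_le one_pos hY
  constructor
  · intro t ht
    have hL : 1 ≤ |t| + Y := by linarith [abs_nonneg t]
    have hL0 : 0 < |t| + Y := by linarith
    refine (norm_mellin_le h t).trans ((H Y t w h ht).trans ?_)
    have e : Y ^ 0 / Y ^ 0 / (|t| + Y) ^ (0 + N) ≤ (|t| + Y) ^ (-A) := by
      rw [pow_zero, div_one, zero_add, ← Real.rpow_natCast, one_div, ← Real.rpow_neg hL0.le]
      exact Real.rpow_le_rpow_of_exponent_le hL (by linarith)
    gcongr
    linarith [abs_nonneg (Cj 0), abs_nonneg (Cj 1)]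
  · intro t
    refine (norm_mellin_le h t).trans ((Jint_half h t).trans ?_)
    have e : Y ^ (-(1 : ℝ) / 2) = 1 / Real.sqrt Y := by
      rw [neg_div, Real.rpow_neg hY0.le, Real.sqrt_eq_rpow, one_div (Y ^ (1 / 2 : ℝ))]
    rw [e, mul_one_div]
    exact div_le_div_of_nonneg_right (by linarith) (Real.sqrt_nonneg Y)
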